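/- Let X be a nonempty complete metric space and Λ a compact metric space, and let w : Λ × X → X be a weakly* hyperbolic IFS. Assume that the space K(X) of nonempty compact subsets of X, with the Hausdorff metric, is ε-chainable for every ε > 0. Then the Hutchinson–Barnsley operator F has a global attractor: there exists a nonempty compact set K ⊆ X with F(K) = K such that Fⁿ(B) → K in the Hausdorff metric for every nonempty compact B ⊆ X. -/

import Mathlib

open Metric Set Filter Topology TopologicalSpace

/-- `seqComp w σ n = w_{σ₁} ∘ ⋯ ∘ w_{σₙ}` (with `σ i` denoting `σ_{i+1}`). -/
def seqComp {Λ X : Type*} (w : Λ → X → X) (σ : ℕ → Λ) : ℕ → X → X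
  | 0 => id
  | n + 1 => seqComp w σ n ∘ w (σ n)

/-- The Hutchinson–Barnsley operator on sets: `F(A) = w(Λ × A)`. -/
def HBset {Λ X : Type*} (w : Λ → X → X) (A : Set X) : Set X :=
  (fun p : Λ × X => w p.1 p.2) '' (Set.univ ×ˢ A)

/-!
Weak* hyperbolicity of `w` at scale `η` passes to the Hutchinson–Barnsley operator `F`: compact sets
at Hausdorff distance less than `η` have iterates that get uniformly close. Chaining with links
shorter than `η` then makes any two `F`-orbits asymptotic.

For convergence, choose `N ≥ 1` such that `F^N` sends points at distance less than `η` to points at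
distance less than `η / 2`, and `m` such that the orbit point `x_m` is `η / 2`-close to
`x_{m+1}, …, x_{m+N}`. By induction in steps of `N`, the whole tail `x_m, x_{m+1}, …` stays in the
`η`-ball around `x_m`, so the contraction applies to all pairs `x_m, x_{m+k}` at once and the orbit
is Cauchy. Its limit is fixed by continuity, and attracts every other orbit.
-/

/-- `ε`-chainability: any two points are joined by finitely many steps shorter than `ε`. -/
def IsChainable (ε : ℝ) (M : Type*) [Dist M] : Prop :=
  ∀ x y : M, ∃ (n : ℕ) (c : ℕ → M), c 0 = x ∧ c n = y ∧ ∀ i < n, dist (c i) (c (i + 1)) < ε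

/-- Weak* hyperbolicity of the IFS `w` with the constant `η` of the definition made explicit. -/
def IsWeakStarHyperbolicAt {Λ X : Type*} [Dist X] (η : ℝ) (w : Λ → X → X) : Prop :=
  ∀ ε > (0 : ℝ), ∃ n₀ : ℕ, ∀ n ≥ n₀, ∀ σ : ℕ → Λ, ∀ x y : X,
    dist x y < η → dist (seqComp w σ n x) (seqComp w σ n y) < ε

/-- The single-map counterpart of weak* hyperbolicity: the iterates of `f` eventually bring all
pairs of points at distance less than `η` uniformly close together. -/
def IsEventuallyContractingAt {Y : Type*} [Dist Y] (η : ℝ) (f : Y → Y) : Prop :=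
  ∀ ε > (0 : ℝ), ∃ n₀ : ℕ, ∀ n ≥ n₀, ∀ x y : Y, dist x y < η → dist (f^[n] x) (f^[n] y) < ε

namespace IsEventuallyContractingAt

section PseudoMetric

variable {Y : Type*} [PseudoMetricSpace Y] {f : Y → Y} {η : ℝ}

theorem tendsto_dist_iterate_of_dist_lt (hf : IsEventuallyContractingAt η f) {x y : Y}
    (hxy : dist x y < η) : Tendsto (fun n => dist (f^[n] x) (f^[n] y)) atTop (𝓝 0) := by
  refine Metric.tendsto_atTop.2 fun ε hε => ?_
  obtain ⟨N, hN⟩ := hf ε hε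
  exact ⟨N, fun n hn => by simpa using hN n hn x y hxy⟩

theorem tendsto_dist_iterate (hf : IsEventuallyContractingAt η f) (hY : IsChainable η Y)
    (x y : Y) : Tendsto (fun n => dist (f^[n] x) (f^[n] y)) atTop (𝓝 0) := by
  obtain ⟨n, c, rfl, rfl, hc⟩ := hY x y
  induction n with
  | zero => simp
  | succ n ih =>
    have hfirst := ih fun i hi => hc i (hi.trans n.lt_succ_self)
    have hlast := hf.tendsto_dist_iterate_of_dist_lt (hc n n.lt_succ_self)
    exact squeeze_zero (fun _ => dist_nonneg) (fun _ => dist_triangle _ _ _)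
      (by simpa using hfirst.add hlast)

theorem exists_forall_dist_iterate_add_lt (hf : IsEventuallyContractingAt η f) (hη : 0 < η)
    (hY : IsChainable η Y) (x : Y) : ∃ m, ∀ k, dist (f^[m] x) (f^[m + k] x) < η := by
  obtain ⟨n₀, hn₀⟩ := hf (η / 2) (half_pos hη)
  set N := n₀ + 1
  have hblock : ∀ᶠ m in atTop, ∀ j ∈ Finset.range (N + 1),
      dist (f^[m] x) (f^[m] (f^[j] x)) < η / 2 :=
    (eventually_all_finset _).2 fun j _ =>
      (hf.tendsto_dist_iterate hY x (f^[j] x)).eventually_lt_const (half_pos hη)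
  obtain ⟨m, hm⟩ := hblock.exists
  have hnear : ∀ j ≤ N, dist (f^[m] x) (f^[m + j] x) < η / 2 := fun j hj => by
    simpa only [Function.iterate_add_apply] using hm j (Finset.mem_range_succ_iff.2 hj)
  refine ⟨m, fun k => ?_⟩
  induction k using Nat.strong_induction_on with
  | _ k ih =>
    obtain hk | hk := le_or_gt k N
    · exact (hnear k hk).trans (half_lt_self hη)
    · obtain ⟨l, rfl⟩ := Nat.exists_eq_add_of_le hk.le
      have hshift : dist (f^[m + N] x) (f^[m + (N + l)] x) < η / 2 := by
        have := hn₀ N n₀.le_succ _ _ (ih l (by omega))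
        rwa [← Function.iterate_add_apply, ← Function.iterate_add_apply, Nat.add_comm N m,
          Nat.add_left_comm N m l] at this
      calc dist (f^[m] x) (f^[m + (N + l)] x)
          ≤ dist (f^[m] x) (f^[m + N] x) + dist (f^[m + N] x) (f^[m + (N + l)] x) :=
            dist_triangle _ _ _
        _ < η / 2 + η / 2 := add_lt_add (hnear N le_rfl) hshift
        _ = η := add_halves η

theorem cauchySeq_iterate (hf : IsEventuallyContractingAt η f) (hη : 0 < η)
    (hY : IsChainable η Y) (x : Y) : CauchySeq fun n => f^[n] x := by
  obtain ⟨m, hm⟩ := hf.exists_forall_dist_iterate_add_lt hη hY x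
  refine Metric.cauchySeq_iff'.2 fun ε hε => ?_
  obtain ⟨N, hN⟩ := hf ε hε
  refine ⟨N + m, fun n hn => ?_⟩
  obtain ⟨k, rfl⟩ := Nat.exists_eq_add_of_le hn
  rw [dist_comm, Nat.add_assoc, Function.iterate_add_apply, Function.iterate_add_apply]
  exact hN N le_rfl _ _ (hm k)

end PseudoMetric

theorem exists_isFixedPt_forall_tendsto_iterate {Y : Type*} [MetricSpace Y] [CompleteSpace Y]
    [Nonempty Y] {f : Y → Y} {η : ℝ} (hf : IsEventuallyContractingAt η f) (hη : 0 < η)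
    (hY : IsChainable η Y) (hcont : Continuous f) :
    ∃ K, Function.IsFixedPt f K ∧ ∀ x, Tendsto (fun n => f^[n] x) atTop (𝓝 K) := by
  obtain ⟨x₀⟩ := ‹Nonempty Y›
  obtain ⟨K, hK⟩ := cauchySeq_tendsto_of_complete (hf.cauchySeq_iterate hη hY x₀)
  exact ⟨K, isFixedPt_of_tendsto_iterate hK hcont.continuousAt,
    fun x => hK.congr_dist (hf.tendsto_dist_iterate hY x₀ x)⟩

end IsEventuallyContractingAt

theorem seqComp_congr {Λ X : Type*} {w : Λ → X → X} {σ τ : ℕ → Λ} {n : ℕ}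
    (h : ∀ i < n, σ i = τ i) : seqComp w σ n = seqComp w τ n := by
  induction n with
  | zero => rfl
  | succ n ih =>
    rw [seqComp, seqComp, ih fun i hi => h i (hi.trans n.lt_succ_self), h n n.lt_succ_self]

theorem iterate_HBset {Λ X : Type*} [Nonempty Λ] (w : Λ → X → X) (n : ℕ) (A : Set X) :
    (HBset w)^[n] A = ⋃ σ : ℕ → Λ, seqComp w σ n '' A := by
  induction n generalizing A with
  | zero => simp [seqComp, iUnion_const]
  | succ n ih =>
    rw [Function.iterate_succ_apply, ih]
    refine Subset.antisymm (iUnion_subset fun σ => ?_) (iUnion_subset fun σ => ?_)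
    · rintro _ ⟨_, ⟨⟨l, a⟩, ⟨-, ha⟩, rfl⟩, rfl⟩
      have hprefix : seqComp w (Function.update σ n l) n = seqComp w σ n :=
        seqComp_congr fun i hi => Function.update_of_ne hi.ne _ _
      exact mem_iUnion.2 ⟨Function.update σ n l, a, ha, by simp [seqComp, hprefix]⟩
    · rintro _ ⟨a, ha, rfl⟩
      exact mem_iUnion.2 ⟨σ, w (σ n) a, ⟨(σ n, a), ⟨mem_univ _, ha⟩, rfl⟩, rfl⟩

theorem hausdorffDist_iUnion_image_le {ι X Y : Type*} [PseudoMetricSpace X] [PseudoMetricSpace Y]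
    {g : ι → X → Y} {η ε : ℝ} (hε : 0 ≤ ε)
    (hg : ∀ i x y, dist x y < η → dist (g i x) (g i y) ≤ ε) {A B : Set X}
    (hAB : hausdorffDist A B < η) (hfin : hausdorffEDist A B ≠ ⊤) :
    hausdorffDist (⋃ i, g i '' A) (⋃ i, g i '' B) ≤ ε := by
  refine hausdorffDist_le_of_mem_dist hε ?_ ?_
  · intro _ hx
    obtain ⟨i, a, ha, rfl⟩ := mem_iUnion.1 hx
    obtain ⟨b, hb, hab⟩ := exists_dist_lt_of_hausdorffDist_lt ha hAB hfin
    exact ⟨g i b, mem_iUnion.2 ⟨i, mem_image_of_mem _ hb⟩, hg i a b hab⟩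
  · intro _ hy
    obtain ⟨i, b, hb, rfl⟩ := mem_iUnion.1 hy
    obtain ⟨a, ha, hab⟩ := exists_dist_lt_of_hausdorffDist_lt' hb hAB hfin
    exact ⟨g i a, mem_iUnion.2 ⟨i, mem_image_of_mem _ ha⟩, hg i b a (by rwa [dist_comm])⟩

section HBcompacts

variable {Λ X : Type*} [TopologicalSpace Λ] [CompactSpace Λ] [Nonempty Λ] {w : Λ → X → X}

/-- The Hutchinson–Barnsley operator as a self-map of the hyperspace of nonempty compact sets. -/
def HBcompacts [TopologicalSpace X] (hw : Continuous fun p : Λ × X => w p.1 p.2)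
    (A : NonemptyCompacts X) : NonemptyCompacts X :=
  ((⊤ : NonemptyCompacts Λ) ×ˢ A).map (fun p => w p.1 p.2) hw

theorem continuous_HBcompacts [TopologicalSpace X]
    (hw : Continuous fun p : Λ × X => w p.1 p.2) : Continuous (HBcompacts hw) :=
  hw.nonemptyCompacts_map.comp
    (NonemptyCompacts.continuous_prod.comp (Continuous.prodMk_right _))

theorem coe_HBcompacts [TopologicalSpace X] (hw : Continuous fun p : Λ × X => w p.1 p.2)
    (A : NonemptyCompacts X) : (HBcompacts hw A : Set X) = HBset w A := by
  simp [HBcompacts, HBset]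

theorem coe_iterate_HBcompacts [TopologicalSpace X]
    (hw : Continuous fun p : Λ × X => w p.1 p.2) (n : ℕ) (A : NonemptyCompacts X) :
    ((HBcompacts hw)^[n] A : Set X) = (HBset w)^[n] A :=
  Function.Semiconj.iterate_right (f := ((↑) : NonemptyCompacts X → Set X))
    (coe_HBcompacts hw) n A

theorem IsWeakStarHyperbolicAt.isEventuallyContractingAt_HBcompacts [MetricSpace X] {η : ℝ}
    (hyp : IsWeakStarHyperbolicAt η w) (hw : Continuous fun p : Λ × X => w p.1 p.2) :
    IsEventuallyContractingAt η (HBcompacts hw) := by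
  intro ε hε
  obtain ⟨n₀, hn₀⟩ := hyp (ε / 2) (half_pos hε)
  refine ⟨n₀, fun n hn A B hAB => lt_of_le_of_lt ?_ (half_lt_self hε)⟩
  rw [NonemptyCompacts.dist_eq, coe_iterate_HBcompacts, coe_iterate_HBcompacts, iterate_HBset,
    iterate_HBset]
  exact hausdorffDist_iUnion_image_le (half_pos hε).le
    (fun σ x y hxy => (hn₀ n hn σ x y hxy).le) hAB
    (hausdorffEDist_ne_top_of_nonempty_of_bounded A.nonempty B.nonempty
      A.isCompact.isBounded B.isCompact.isBounded)

end HBcompacts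

theorem stmt_14_general {Λ X : Type*} [TopologicalSpace Λ] [CompactSpace Λ] [Nonempty Λ]
    [MetricSpace X] [CompleteSpace X] [Nonempty X]
    (w : Λ → X → X) (hw : Continuous fun p : Λ × X => w p.1 p.2) {η : ℝ} (hη : 0 < η)
    (hyp : IsWeakStarHyperbolicAt η w) (hchain : IsChainable η (NonemptyCompacts X)) :
    ∃ K : Set X, K.Nonempty ∧ IsCompact K ∧ HBset w K = K ∧
      ∀ B : Set X, B.Nonempty → IsCompact B →
        Tendsto (fun n => hausdorffDist ((HBset w)^[n] B) K) atTop (𝓝 0) := by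
  obtain ⟨K, hfix, hconv⟩ :=
    (hyp.isEventuallyContractingAt_HBcompacts hw).exists_isFixedPt_forall_tendsto_iterate
      hη hchain (continuous_HBcompacts hw)
  refine ⟨K, K.nonempty, K.isCompact, by rw [← coe_HBcompacts hw, hfix], fun B hB hBc => ?_⟩
  obtain ⟨C, rfl⟩ : ∃ C : NonemptyCompacts X, (C : Set X) = B := ⟨⟨⟨B, hBc⟩, hB⟩, rfl⟩
  simpa only [NonemptyCompacts.dist_eq, coe_iterate_HBcompacts] using
    tendsto_iff_dist_tendsto_zero.1 (hconv C)

/-- A weakly* hyperbolic IFS on a nonempty complete metric space whose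
hyperspace of nonempty compact subsets is ε-chainable for every ε > 0 has a
global attractor which is a compact invariant set. -/
theorem stmt_14 {Λ X : Type*} [MetricSpace Λ] [CompactSpace Λ] [Nonempty Λ]
    [MetricSpace X] [CompleteSpace X] [Nonempty X]
    (w : Λ → X → X) (hw : Continuous fun p : Λ × X => w p.1 p.2)
    (hyp : ∃ η > (0 : ℝ), ∀ ε > (0 : ℝ), ∃ n₀ : ℕ, ∀ n ≥ n₀, ∀ σ : ℕ → Λ, ∀ x y : X,
      dist x y < η → dist (seqComp w σ n x) (seqComp w σ n y) < ε)
    (hchain : ∀ ε > (0 : ℝ), ∀ A B : NonemptyCompacts X,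
      ∃ (n : ℕ) (c : ℕ → NonemptyCompacts X), c 0 = A ∧ c n = B ∧
        ∀ i < n, dist (c i) (c (i + 1)) < ε) :
    ∃ K : Set X, K.Nonempty ∧ IsCompact K ∧ HBset w K = K ∧
      ∀ B : Set X, B.Nonempty → IsCompact B →
        Tendsto (fun n => hausdorffDist ((HBset w)^[n] B) K) atTop (𝓝 0) := by
  obtain ⟨η, hη, hyp⟩ := hyp
  exact stmt_14_general w hw hη hyp (hchain η hη)
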